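/- Let 0 < p < 1, let α = max(p, 1−p), and let m ≥ k ≥ 1. Let A be a random m×k matrix whose entries are independent Bernoulli(p) random variables. Then the probability that A has rank k over the real numbers is at least 1 − min(1, k·α^{m−k+1}). -/

import Mathlib

open Finset Matrix
open scoped Classical

/-! A subspace `V` of `K ^ ι` of codimension at least `n` has `n` coordinates that are determined by
the remaining ones on `V`; so, conditionally on the remaining coordinates, a random vector has at
most one way to fall into `V`, of probability at most `α ^ n`. The columns of a matrix with `k`
columns are dependent only if one of them lies in the span of the other `k - 1`, which has
codimension at least `m - k + 1`; condition on those columns and sum over the `k` choices. -/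

section LinearAlgebra

variable {ι K : Type*}

theorem exists_finset_card_eq_linearIndepOn {M : Type*} [Finite ι] [DivisionRing K]
    [AddCommGroup M] [Module K M] {v : ι → M} {n : ℕ}
    (hn : n ≤ Module.finrank K (Submodule.span K (Set.range v))) :
    ∃ t : Finset ι, #t = n ∧ LinearIndepOn K v (t : Set ι) := by
  have := Fintype.ofFinite ι
  obtain ⟨b, -, -, hspan, hb⟩ :=
    exists_linearIndepOn_extension (linearIndepOn_empty K v) (Set.empty_subset Set.univ)
  have hle : Submodule.span K (Set.range v) ≤ Submodule.span K (v '' b) :=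
    Submodule.span_le.2 (Set.image_univ ▸ hspan)
  have hcard : n ≤ #b.toFinset := calc
    n ≤ Module.finrank K (Submodule.span K (Set.range v)) := hn
    _ ≤ Module.finrank K (Submodule.span K (v '' b)) :=
      have := FiniteDimensional.span_of_finite K (b.toFinite.image v)
      Submodule.finrank_mono hle
    _ ≤ #(v '' b).toFinset := finrank_span_le_card _
    _ ≤ #b.toFinset := by simpa only [Set.toFinset_image] using card_image_le
  obtain ⟨t, htb, ht⟩ := exists_subset_card_eq hcard
  exact ⟨t, ht, hb.mono (Set.subset_toFinset.1 htb)⟩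

theorem span_range_mkQ_single_one [Finite ι] [DecidableEq ι] [Ring K] (V : Submodule K (ι → K)) :
    Submodule.span K (Set.range fun i => V.mkQ (Pi.single i 1)) = ⊤ := by
  have hbasis : Submodule.span K (Set.range fun i : ι => (Pi.single i 1 : ι → K)) = ⊤ := by
    simpa only [← Pi.basisFun_apply] using (Pi.basisFun K ι).span_eq
  rw [Set.range_comp', ← Submodule.map_span, hbasis, Submodule.map_top, Submodule.range_mkQ]

theorem exists_finset_card_eq_injOn_restrict_compl [Fintype ι] [DecidableEq ι] [DivisionRing K]
    {V : Submodule K (ι → K)} {n : ℕ} (hn : Module.finrank K V + n ≤ Fintype.card ι) :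
    ∃ t : Finset ι, #t = n ∧ Set.InjOn (tᶜ.restrict (π := fun _ => K)) V := by
  have hcodim : n ≤ Module.finrank K ((ι → K) ⧸ V) := by
    have := V.finrank_quotient_add_finrank
    rw [Module.finrank_fintype_fun_eq_card] at this
    omega
  rw [← finrank_top, ← span_range_mkQ_single_one] at hcodim
  obtain ⟨t, ht, hindep⟩ := exists_finset_card_eq_linearIndepOn hcodim
  refine ⟨t, ht, fun u hu v hv huv => ?_⟩
  have hoff : ∀ i ∉ t, (u - v) i = 0 := fun i hi =>
    sub_eq_zero.2 (congrFun huv ⟨i, mem_compl.2 hi⟩)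
  have hsum : ∑ i ∈ t, (u - v) i • V.mkQ (Pi.single i 1) = 0 := calc
    _ = V.mkQ (∑ i, (u - v) i • Pi.single i 1) := by
      rw [map_sum]
      simp only [map_smul]
      exact sum_subset (subset_univ t) fun i _ hi => by rw [hoff i hi, zero_smul]
    _ = V.mkQ (u - v) := by rw [← pi_eq_sum_univ']
    _ = 0 := (Submodule.Quotient.mk_eq_zero V).2 (V.sub_mem hu hv)
  ext i
  by_cases hi : i ∈ t
  · exact sub_eq_zero.1 (linearIndepOn_finset_iff.1 hindep _ hsum i hi)
  · exact sub_eq_zero.1 (hoff i hi)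

end LinearAlgebra

section ProductLaw

variable {ι κ β γ : Type*} [Fintype ι] [Fintype κ] [Fintype β] [Fintype γ]

theorem sum_filter_exists_le {M : Type*} [AddCommMonoid M] [PartialOrder M] [IsOrderedAddMonoid M]
    {f : γ → M} (hf : ∀ b, 0 ≤ f b) (P : κ → γ → Prop) :
    ∑ b with ∃ j, P j b, f b ≤ ∑ j, ∑ b with P j b, f b := by
  simp only [sum_filter]
  rw [sum_comm]
  refine sum_le_sum fun b _ => ?_
  have hnonneg : ∀ j ∈ univ, 0 ≤ if P j b then f b else 0 := fun j _ => ite_nonneg (hf b) le_rfl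
  split_ifs with h
  · obtain ⟨j, hj⟩ := h
    simpa only [if_pos hj] using single_le_sum hnonneg (mem_univ j)
  · exact sum_nonneg hnonneg

theorem prod_mem_stdSimplex [DecidableEq ι] {w : ι → β → ℝ} (hw : ∀ i, w i ∈ stdSimplex ℝ β) :
    (fun v : ι → β => ∏ i, w i (v i)) ∈ stdSimplex ℝ (ι → β) :=
  ⟨fun v => prod_nonneg fun i _ => (hw i).1 (v i), by
    rw [← Fintype.prod_sum]
    exact prod_eq_one fun i _ => (hw i).2⟩

theorem sum_prod_le_pow_card_of_injOn_restrict_compl [DecidableEq ι] {w : ι → β → ℝ} {α : ℝ}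
    (hw : ∀ i, w i ∈ stdSimplex ℝ β) (hwα : ∀ i b, w i b ≤ α) {E : Finset (ι → β)} {t : Finset ι}
    (hE : Set.InjOn (tᶜ.restrict (π := fun _ => β)) E) :
    ∑ v ∈ E, ∏ i, w i (v i) ≤ α ^ #t := by
  have ht : ∀ v : ι → β, ∏ i ∈ t, w i (v i) ≤ α ^ #t := fun v =>
    (prod_le_prod (fun i _ => (hw i).1 (v i)) fun i _ => hwα i (v i)).trans_eq (prod_const α)
  have hα : 0 ≤ α ^ #t := by
    obtain ⟨v, -⟩ := nonempty_of_sum_ne_zero ((prod_mem_stdSimplex hw).2.trans_ne one_ne_zero)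
    exact (prod_nonneg fun i _ => (hw i).1 (v i)).trans (ht v)
  have hrest := prod_mem_stdSimplex fun i : ↥tᶜ => hw i
  calc ∑ v ∈ E, ∏ i, w i (v i)
      = ∑ v ∈ E, (∏ i ∈ t, w i (v i)) * ∏ i : ↥tᶜ, w i (tᶜ.restrict v i) :=
        sum_congr rfl fun v _ => by
          rw [← prod_mul_prod_compl t, ← prod_coe_sort tᶜ]; rfl
    _ ≤ ∑ v ∈ E, α ^ #t * ∏ i : ↥tᶜ, w i (tᶜ.restrict v i) :=
        sum_le_sum fun v _ => mul_le_mul_of_nonneg_right (ht v) (hrest.1 _)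
    _ = α ^ #t * ∑ u ∈ E.image tᶜ.restrict, ∏ i : ↥tᶜ, w i (u i) := by
        rw [← mul_sum, sum_image hE]
    _ ≤ α ^ #t * 1 := by
        refine mul_le_mul_of_nonneg_left ?_ hα
        exact (sum_le_univ_sum_of_nonneg hrest.1).trans_eq hrest.2
    _ = α ^ #t := mul_one _

theorem sum_filter_prod_le_of_forall_update [DecidableEq κ] {q : κ → γ → ℝ}
    (hq : ∀ l, q l ∈ stdSimplex ℝ γ) (E : (κ → γ) → Prop) (j : κ) {ε : ℝ}
    (hε : ∀ B, ∑ c with E (Function.update B j c), q j c ≤ ε) :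
    ∑ B with E B, ∏ l, q l (B l) ≤ ε := by
  -- Resampling: swapping `B j` with an independent copy `c` preserves the joint law of `(B, c)`.
  let swap : (κ → γ) × γ → (κ → γ) × γ := fun Bc => (Function.update Bc.1 j Bc.2, Bc.1 j)
  have hswap : Function.Involutive swap := fun Bc => by simp [swap]
  have hlaw : ∀ B c, (∏ l, q l (Function.update B j c l)) * q j (B j) =
      (∏ l, q l (B l)) * q j c := fun B c => by
    have hrest : ∏ l ∈ {j}ᶜ, q l (Function.update B j c l) = ∏ l ∈ {j}ᶜ, q l (B l) :=
      prod_congr rfl fun l hl => by rw [Function.update_of_ne (by simpa using hl)]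
    rw [Fintype.prod_eq_mul_prod_compl j, Fintype.prod_eq_mul_prod_compl j (fun l => q l (B l)),
      hrest, Function.update_self]
    ring
  have hprod := prod_mem_stdSimplex hq
  calc ∑ B with E B, ∏ l, q l (B l)
      = ∑ Bc : (κ → γ) × γ, if E Bc.1 then (∏ l, q l (Bc.1 l)) * q j Bc.2 else 0 := by
        rw [Fintype.sum_prod_type, sum_filter]
        refine sum_congr rfl fun B _ => ?_
        split_ifs
        · simp only [← mul_sum, (hq j).2, mul_one]
        · rw [sum_const_zero]
    _ = ∑ Bc : (κ → γ) × γ, if E (Function.update Bc.1 j Bc.2)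
          then (∏ l, q l (Bc.1 l)) * q j Bc.2 else 0 := by
        rw [← Equiv.sum_comp (hswap.toPerm swap)]
        exact sum_congr rfl fun Bc _ => by
          simp only [Function.Involutive.coe_toPerm, swap, hlaw]
    _ = ∑ B, (∏ l, q l (B l)) * ∑ c with E (Function.update B j c), q j c := by
        simp only [Fintype.sum_prod_type, sum_filter, mul_sum, mul_ite, mul_zero]
    _ ≤ ∑ B, (∏ l, q l (B l)) * ε :=
        sum_le_sum fun B _ => mul_le_mul_of_nonneg_left (hε B) (hprod.1 B)
    _ = ε := by rw [← sum_mul, hprod.2, one_mul]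

end ProductLaw

section RandomVectors

variable {ι κ β K : Type*} [Fintype ι] [Fintype κ] [Fintype β] [DivisionRing K]
  [DecidableEq ι] [DecidableEq κ] {x : β → K} {α : ℝ}

theorem sum_filter_comp_mem_submodule_le {w : ι → β → ℝ} (hx : Function.Injective x)
    (hw : ∀ i, w i ∈ stdSimplex ℝ β) (hwα : ∀ i b, w i b ≤ α) {V : Submodule K (ι → K)} {n : ℕ}
    (hn : Module.finrank K V + n ≤ Fintype.card ι) :
    ∑ v : ι → β with x ∘ v ∈ V, ∏ i, w i (v i) ≤ α ^ n := by
  obtain ⟨t, rfl, ht⟩ := exists_finset_card_eq_injOn_restrict_compl hn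
  refine sum_prod_le_pow_card_of_injOn_restrict_compl hw hwα fun u hu v hv huv => ?_
  refine hx.comp_left (ht (mem_filter.1 hu).2 (mem_filter.1 hv).2 ?_)
  exact funext fun i => congrArg x (congrFun huv i)

theorem sum_filter_mem_span_others_le {w : κ → ι → β → ℝ} (hx : Function.Injective x)
    (hw : ∀ l i, w l i ∈ stdSimplex ℝ β) (hwα : ∀ l i b, w l i b ≤ α)
    (hκι : Fintype.card κ ≤ Fintype.card ι) (j : κ) :
    ∑ B : κ → ι → β with x ∘ B j ∈ Submodule.span K ((fun l => x ∘ B l) '' (Set.univ \ {j})),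
      ∏ l, ∏ i, w l i (B l i) ≤ α ^ (Fintype.card ι - Fintype.card κ + 1) := by
  refine sum_filter_prod_le_of_forall_update (fun l => prod_mem_stdSimplex (hw l)) _ j fun B => ?_
  have hothers : ∀ c, (fun l => x ∘ Function.update B j c l) '' (Set.univ \ {j}) =
      (fun l => x ∘ B l) '' (Set.univ \ {j}) := fun c =>
    Set.image_congr fun l hl => by rw [Function.update_of_ne hl.2]
  simp only [hothers, Function.update_self]
  have hdim : Module.finrank K (Submodule.span K ((fun l => x ∘ B l) '' (Set.univ \ {j}))) ≤
      Fintype.card κ - 1 := calc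
    _ ≤ #((fun l => x ∘ B l) '' (Set.univ \ {j})).toFinset := finrank_span_le_card _
    _ ≤ #(univ \ {j}) := by simpa [Set.toFinset_image] using card_image_le
    _ = Fintype.card κ - 1 := by simp [card_sdiff]
  have hpos : 0 < Fintype.card κ := Fintype.card_pos_iff.2 ⟨j⟩
  exact sum_filter_comp_mem_submodule_le hx (hw j) (hwα j) (by omega)

theorem sum_filter_not_linearIndependent_le {w : κ → ι → β → ℝ} (hx : Function.Injective x)
    (hw : ∀ l i, w l i ∈ stdSimplex ℝ β) (hwα : ∀ l i b, w l i b ≤ α)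
    (hκι : Fintype.card κ ≤ Fintype.card ι) :
    ∑ B : κ → ι → β with ¬ LinearIndependent K (fun l => x ∘ B l), ∏ l, ∏ i, w l i (B l i) ≤
      Fintype.card κ * α ^ (Fintype.card ι - Fintype.card κ + 1) := by
  have hprod := prod_mem_stdSimplex fun l => prod_mem_stdSimplex (hw l)
  simp only [linearIndependent_iff_notMem_span, not_forall, not_not]
  refine (sum_filter_exists_le hprod.1 _).trans ?_
  calc _ ≤ ∑ _j : κ, α ^ (Fintype.card ι - Fintype.card κ + 1) :=
        sum_le_sum fun j _ => sum_filter_mem_span_others_le hx hw hwα hκι j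
    _ = _ := by rw [sum_const, card_univ, nsmul_eq_mul]

end RandomVectors

theorem rank_eq_card_iff_linearIndependent_col {m n R : Type*} [Fintype n] [CommRing R]
    [Nontrivial R] (A : Matrix m n R) : A.rank = Fintype.card n ↔ LinearIndependent R A.col := by
  rw [linearIndependent_iff_card_eq_finrank_span, rank_eq_finrank_span_cols, eq_comm, Set.finrank]

theorem stmt_5_general {m n β K : Type*} [Fintype m] [Fintype n] [Fintype β] [Field K]
    [DecidableEq m] [DecidableEq n] (hnm : Fintype.card n ≤ Fintype.card m)
    {x : β → K} (hx : Function.Injective x) {w : m → n → β → ℝ} {α : ℝ}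
    (hw : ∀ i j, w i j ∈ stdSimplex ℝ β) (hwα : ∀ i j b, w i j b ≤ α) :
    (∑ A : m → n → β,
        if (Matrix.of fun i j => x (A i j)).rank = Fintype.card n then
          ∏ i, ∏ j, w i j (A i j)
        else 0)
      ≥ 1 - min 1 (Fintype.card n * α ^ (Fintype.card m - Fintype.card n + 1)) := by
  have hprod := prod_mem_stdSimplex fun i => prod_mem_stdSimplex (hw i)
  have htransp : ∑ A : m → n → β with (Matrix.of fun i j => x (A i j)).rank ≠ Fintype.card n,
        ∏ i, ∏ j, w i j (A i j) =
      ∑ B : n → m → β with ¬ LinearIndependent K (fun j => x ∘ B j),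
        ∏ j, ∏ i, w i j (B j i) := by
    simp only [sum_filter, ne_eq, rank_eq_card_iff_linearIndependent_col]
    rw [← (Equiv.piComm fun _ _ => β).sum_comp]
    exact sum_congr rfl fun B _ => if_congr Iff.rfl prod_comm rfl
  have hdep := htransp.trans_le
    (sum_filter_not_linearIndependent_le hx (fun j i => hw i j) (fun j i => hwα i j) hnm)
  have htotal := (sum_filter_add_sum_filter_not univ
    (fun A : m → n → β => (Matrix.of fun i j => x (A i j)).rank = Fintype.card n) _).trans hprod.2
  rw [← sum_filter, ge_iff_le, sub_le_comm]
  refine le_min (sub_le_self _ (sum_nonneg fun A _ => hprod.1 A)) ?_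
  exact (sub_eq_of_eq_add' htotal.symm).trans_le hdep

/-- Lemma 4 (rank of a matrix drawn from the i.i.d. ensemble).
The entries of the random `m × k` binary matrix are independent Bernoulli(p);
with `α = max(p, 1-p)` and `m ≥ k ≥ 1`, the matrix has real rank `k` with
probability at least `1 - min(1, k * α^(m-k+1))`. -/
theorem stmt_5 (m k : ℕ) (hk : 1 ≤ k) (hmk : k ≤ m)
    (p : ℝ) (hp0 : 0 < p) (hp1 : p < 1) :
    (∑ A : Fin m → Fin k → Bool,
        if (Matrix.of (fun i j => if A i j then (1 : ℝ) else 0) :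
            Matrix (Fin m) (Fin k) ℝ).rank = k then
          ∏ i : Fin m, ∏ j : Fin k, (if A i j then p else 1 - p)
        else 0)
      ≥ 1 - min 1 ((k : ℝ) * (max p (1 - p)) ^ (m - k + 1)) := by
  have hx : Function.Injective fun b : Bool => if b then (1 : ℝ) else 0 := by
    simp [Function.Injective]
  have hw : (fun b : Bool => if b then p else 1 - p) ∈ stdSimplex ℝ Bool :=
    ⟨by simp [hp0.le, hp1.le], by simp⟩
  simpa only [Fintype.card_fin] using stmt_5_general (m := Fin m) (n := Fin k) (by simpa using hmk)
    hx (fun _ _ => hw) fun _ _ => by simp
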